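/- (Support of the solution, divergent form) Let p ∈ (1,∞), l ∈ (0,p), n ∈ [1,∞) real, R ∈ (0,∞]. Let φ : ℝ → ℝ be continuous and odd with τφ(τ) > 0 for a.e. τ. Let a be locally absolutely continuous on (0,R) with a > 0 a.e., let d_a(τ) := (n−1)a(τ)/τ + (1/p)a'(τ) satisfy d_a > 0 a.e. with d_a and d_a^{−1/(p−1)} locally integrable on (0,R). Let h : (0,R) × ℝ² → ℝ be a Carathéodory function such that for some θ ∈ (0,1] and a non-negative measurable q locally integrable on (0,R): h(τ,λ₀,λ₁)λ₁ ≤ θ q(τ)|λ₀|^l |λ₁|^{p−l} + (1−θ) d_a(τ)|λ₁|^p for all λ₀, λ₁ ∈ ℝ and a.e. τ. Assume K(s,r,q,d_a) < ∞ for every 0 < s < r < R. Let u and Φ_p(u') be locally absolutely continuous on (0,R) and suppose u solves the divergent ODE: (a(τ)Φ_p(u'(τ)))' + (n−1)(a(τ)/τ)Φ_p(u'(τ)) − h(τ,u(τ),u'(τ)) + φ(u(τ)) = 0 for a.e. τ ∈ (0,R). If u(s) = 0 and u'(s) = 0 for some s ∈ (0,R), then u ≡ 0 on [s,R). -/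

import Mathlib

open MeasureTheory Set Filter
open scoped ENNReal

/-- `Φ_p(λ) = |λ|^{p-2} λ` for `λ ≠ 0`, and `Φ_p(0) = 0`. -/
noncomputable def PhiP (p x : ℝ) : ℝ := if x = 0 then 0 else |x| ^ (p - 2) * x

/-- `u` is absolutely continuous on `[s,t]` with a.e. derivative `u'`:
`u'` is integrable on `[s,t]` and the fundamental theorem of calculus holds. -/
def ACOn (u u' : ℝ → ℝ) (s t : ℝ) : Prop :=
  MeasureTheory.IntegrableOn u' (Set.Icc s t) ∧
    ∀ x ∈ Set.Icc s t, u x = u s + ∫ σ in s..x, u' σ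

/-- The Beesack–Das constant
`K(s,·,q,v) = ((p-l)/p)^{(p-l)/p} [∫_S q(t)^{p/l} v(t)^{-(p-l)/l}
  (∫_s^t v(σ)^{-1/(p-1)} dσ)^{p-1} dt]^{l/p}`, over a set `S`. -/
noncomputable def BDK (p l : ℝ) (q v : ℝ → ℝ) (s : ℝ) (S : Set ℝ) : ℝ≥0∞ :=
  ENNReal.ofReal (((p - l) / p) ^ ((p - l) / p)) *
    (∫⁻ t in S,
      ENNReal.ofReal (q t) ^ (p / l) * ENNReal.ofReal (v t) ^ (-((p - l) / l)) *
        (∫⁻ σ in Set.Ioc s t, ENNReal.ofReal (v σ) ^ (-(1 / (p - 1)))) ^ (p - 1)) ^ (l / p)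

/-- `δ_a(τ) = (n-1) a(τ)/τ - (1 - 1/p) a'(τ)`. -/
noncomputable def deltaA (n p : ℝ) (a a' : ℝ → ℝ) : ℝ → ℝ :=
  fun τ => (n - 1) * a τ / τ - (1 - 1 / p) * a' τ

/-- `d_a(τ) = (n-1) a(τ)/τ + (1/p) a'(τ)`. -/
noncomputable def dA (n p : ℝ) (a a' : ℝ → ℝ) : ℝ → ℝ :=
  fun τ => (n - 1) * a τ / τ + (1 / p) * a' τ

/-!
The energy `E = (p - 1) / p * a |u'| ^ p + ∫₀ᵘ φ` is non-negative, vanishes at `s`, and vanishes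
only where `u` does. Along a solution,
`E' = h u' - d |u'| ^ p ≤ θ (q |u| ^ l |u'| ^ (p - l) - d |u'| ^ p)`.
If `u x = 0`, an Opial-type inequality bounds `∫ q |u| ^ l |u'| ^ (p - l)` over `(x, r]` by a
constant times `∫ d |u'| ^ p`. Since the integral defining the constant is finite, the constant
drops below `1` as `r ↓ x`, so `E r ≤ E x`. Hence `E = 0` at `x` forces `E = 0` slightly to the
right of `x`, and the set `{E = 0}`, being closed, spreads over the whole interval.
-/

open scoped Topology NNReal

section AbsoluteContinuity

lemma absolutelyContinuousOnInterval_congr {X : Type*} [PseudoMetricSpace X] {f g : ℝ → X}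
    {s t : ℝ} (hfg : EqOn f g (uIcc s t)) (hf : AbsolutelyContinuousOnInterval f s t) :
    AbsolutelyContinuousOnInterval g s t := by
  refine hf.congr' ?_
  filter_upwards [mem_inf_of_right (mem_principal_self _)] with E hE
  refine Finset.sum_congr rfl fun i hi => ?_
  rw [hfg (hE.1 i hi).1, hfg (hE.1 i hi).2]

lemma lipschitzOnWith_comp_absolutelyContinuousOnInterval {X Y : Type*} [PseudoMetricSpace X]
    [PseudoMetricSpace Y] {K : ℝ≥0} {f : X → Y} {S : Set X} {u : ℝ → X} {s t : ℝ}
    (hf : LipschitzOnWith K f S) (hu : AbsolutelyContinuousOnInterval u s t)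
    (hS : MapsTo u (uIcc s t) S) : AbsolutelyContinuousOnInterval (f ∘ u) s t := by
  refine squeeze_zero' (.of_forall fun E => Finset.sum_nonneg fun i _ => dist_nonneg) ?_
    (by simpa only [mul_zero] using Tendsto.const_mul (K : ℝ) hu)
  filter_upwards [mem_inf_of_right (mem_principal_self _)] with E hE
  rw [Finset.mul_sum]
  exact Finset.sum_le_sum fun i hi => hf.dist_le_mul _ (hS (hE.1 i hi).1) _ (hS (hE.1 i hi).2)

lemma contDiff_comp_absolutelyContinuousOnInterval {f u : ℝ → ℝ} {s t : ℝ} (hf : ContDiff ℝ 1 f)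
    (hu : AbsolutelyContinuousOnInterval u s t) : AbsolutelyContinuousOnInterval (f ∘ u) s t := by
  obtain ⟨C, hC⟩ := hu.exists_bound
  obtain ⟨K, hK⟩ := (hf.contDiffOn (s := Icc (-C) C)).exists_lipschitzOnWith one_ne_zero
    (convex_Icc _ _) isCompact_Icc
  exact lipschitzOnWith_comp_absolutelyContinuousOnInterval hK hu fun x hx => abs_le.1 (hC x hx)

lemma sub_le_integral_of_ae_deriv_le {f g : ℝ → ℝ} {s t : ℝ} (hst : s ≤ t)
    (hf : AbsolutelyContinuousOnInterval f s t) (hg : IntervalIntegrable g volume s t)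
    (hfg : ∀ᵐ x ∂volume.restrict (Icc s t), deriv f x ≤ g x) :
    f t - f s ≤ ∫ x in s..t, g x := by
  rw [← hf.integral_deriv_eq_sub]
  exact intervalIntegral.integral_mono_ae_restrict hst hf.intervalIntegrable_deriv hg hfg

namespace ACOn

variable {u u' : ℝ → ℝ} {s t x y : ℝ}

lemma mono (h : ACOn u u' s t) (hsx : s ≤ x) (hyt : y ≤ t) : ACOn u u' x y := by
  refine ⟨h.1.mono_set (Icc_subset_Icc hsx hyt), fun z hz => ?_⟩
  have hzt : z ≤ t := hz.2.trans hyt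
  have hxt : x ≤ t := hz.1.trans hzt
  have hint : ∀ w, s ≤ w → w ≤ t → IntervalIntegrable u' volume s w := fun w hsw hwt =>
    (intervalIntegrable_iff_integrableOn_Icc_of_le hsw).2 (h.1.mono_set (Icc_subset_Icc_right hwt))
  rw [h.2 z ⟨hsx.trans hz.1, hzt⟩, h.2 x ⟨hsx, hxt⟩, add_assoc,
    intervalIntegral.integral_add_adjacent_intervals (hint x hsx hxt)
      ((hint x hsx hxt).symm.trans (hint z (hsx.trans hz.1) hzt))]

lemma intervalIntegrable (h : ACOn u u' s t) (hst : s ≤ t) : IntervalIntegrable u' volume s t :=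
  (intervalIntegrable_iff_integrableOn_Icc_of_le hst).2 h.1

lemma absolutelyContinuousOnInterval (h : ACOn u u' s t) (hst : s ≤ t) :
    AbsolutelyContinuousOnInterval u s t := by
  have hconst : AbsolutelyContinuousOnInterval (fun _ => u s) s t :=
    contDiffOn_const.absolutelyContinuousOnInterval
  refine absolutelyContinuousOnInterval_congr (fun x hx => ?_) (hconst.add
    ((h.intervalIntegrable hst).absolutelyContinuousOnInterval_intervalIntegral left_mem_uIcc))
  exact (h.2 x (uIcc_of_le hst ▸ hx)).symm

lemma continuousOn (h : ACOn u u' s t) (hst : s ≤ t) : ContinuousOn u (Icc s t) :=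
  uIcc_of_le hst ▸ (h.absolutelyContinuousOnInterval hst).continuousOn

lemma ae_hasDerivAt (h : ACOn u u' s t) (hst : s ≤ t) :
    ∀ᵐ x ∂volume.restrict (Icc s t), HasDerivAt u (u' x) x := by
  rw [← restrict_Ioo_eq_restrict_Icc, ae_restrict_iff' measurableSet_Ioo]
  filter_upwards [(h.intervalIntegrable hst).ae_hasDerivAt_integral] with x hx hxst
  rw [uIcc_of_le hst] at hx
  refine ((hx (Ioo_subset_Icc_self hxst) s (left_mem_Icc.2 hst)).const_add
    (u s)).congr_of_eventuallyEq ?_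
  filter_upwards [Ioo_mem_nhds hxst.1 hxst.2] with y hy
  exact h.2 y (Ioo_subset_Icc_self hy)

lemma enorm_sub_le_lintegral (h : ACOn u u' s t) (hx : x ∈ Icc s t) :
    ‖u x - u s‖ₑ ≤ ∫⁻ σ in Ioc s x, ‖u' σ‖ₑ := by
  rw [h.2 x hx, add_sub_cancel_left, intervalIntegral.integral_of_le hx.1]
  exact enorm_integral_le_lintegral_enorm _

end ACOn

end AbsoluteContinuity

section PhiP

variable {p : ℝ}

lemma PhiP_eq (p x : ℝ) : PhiP p x = |x| ^ (p - 2) * x := by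
  by_cases hx : x = 0 <;> simp [PhiP, hx]

lemma PhiP_mul_self (hp : p ≠ 0) (x : ℝ) : PhiP p x * x = |x| ^ p := by
  rcases eq_or_ne x 0 with rfl | hx
  · simp [Real.zero_rpow hp]
  · rw [PhiP_eq, mul_assoc, ← abs_mul_abs_self, ← sq, ← Real.rpow_natCast,
      ← Real.rpow_add (abs_pos.2 hx)]
    simp

lemma abs_PhiP (hp : p ≠ 1) (x : ℝ) : |PhiP p x| = |x| ^ (p - 1) := by
  rcases eq_or_ne x 0 with rfl | hx
  · simp [PhiP, Real.zero_rpow (sub_ne_zero.2 hp)]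
  · rw [PhiP_eq, abs_mul, abs_of_nonneg (by positivity : 0 ≤ |x| ^ (p - 2)),
      ← Real.rpow_add_one (abs_ne_zero.2 hx)]
    ring_nf

lemma abs_PhiP_rpow_conjExponent (hp : p ≠ 1) (x : ℝ) :
    |PhiP p x| ^ p.conjExponent = |x| ^ p := by
  rw [abs_PhiP hp, ← Real.rpow_mul (abs_nonneg x), Real.conjExponent,
    mul_div_cancel₀ _ (sub_ne_zero.2 hp)]

lemma PhiP_conjExponent_PhiP (hp : p ≠ 1) (x : ℝ) : PhiP p.conjExponent (PhiP p x) = x := by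
  rcases eq_or_ne x 0 with rfl | hx
  · simp [PhiP]
  · have hexp : (p - 1) * (p.conjExponent - 2) + (p - 2) = 0 := by
      have := sub_ne_zero.2 hp
      rw [Real.conjExponent]
      field_simp
      ring
    rw [PhiP_eq, abs_PhiP hp, PhiP_eq, ← mul_assoc, ← Real.rpow_mul (abs_nonneg x),
      ← Real.rpow_add (abs_pos.2 hx), hexp, Real.rpow_zero, one_mul]

lemma hasDerivAt_abs_rpow_PhiP (hp : 1 < p) (x : ℝ) :
    HasDerivAt (fun y => |y| ^ p) (p * PhiP p x) x := by
  simpa only [PhiP_eq, mul_assoc] using hasDerivAt_abs_rpow x hp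

lemma contDiff_abs_rpow (hp : 1 < p) : ContDiff ℝ 1 fun x : ℝ => |x| ^ p := by
  simpa only [Real.norm_eq_abs] using contDiff_norm_rpow (E := ℝ) hp

lemma continuous_PhiP (hp : 1 < p) : Continuous (PhiP p) := by
  refine ((contDiff_abs_rpow hp).continuous_deriv_one.div_const p).congr fun x => ?_
  rw [(hasDerivAt_abs_rpow_PhiP hp x).deriv, mul_div_cancel_left₀ _ (by positivity)]

lemma one_lt_conjExponent (hp : 1 < p) : 1 < p.conjExponent :=
  (Real.HolderConjugate.conjExponent hp).symm.lt

lemma continuousOn_of_continuousOn_PhiP (hp : 1 < p) {X : Type*} [TopologicalSpace X] {f : X → ℝ}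
    {S : Set X} (hf : ContinuousOn (fun x => PhiP p (f x)) S) : ContinuousOn f S :=
  ((continuous_PhiP (one_lt_conjExponent hp)).comp_continuousOn hf).congr fun x _ =>
    (PhiP_conjExponent_PhiP hp.ne' (f x)).symm

end PhiP

section Opial

variable {p l : ℝ}

lemma lintegral_mul_rpow_le_weighted_holder {α : Type*} [MeasurableSpace α] {μ : Measure α}
    (hl0 : 0 < l) (hlp : l < p) {f g v : α → ℝ≥0∞} (hf : AEMeasurable f μ) (hg : AEMeasurable g μ)
    (hv : AEMeasurable v μ) (hv0 : ∀ᵐ t ∂μ, v t ≠ 0) (hvtop : ∀ᵐ t ∂μ, v t ≠ ⊤) :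
    ∫⁻ t, f t * g t ^ (p - l) ∂μ ≤
      (∫⁻ t, f t ^ (p / l) * v t ^ (-((p - l) / l)) ∂μ) ^ (l / p) *
        (∫⁻ t, v t * g t ^ p ∂μ) ^ ((p - l) / p) := by
  have hp : 0 < p := hl0.trans hlp
  have hpl : 0 < p - l := sub_pos.2 hlp
  have hconj : (p / l).HolderConjugate (p / (p - l)) := by
    rw [Real.holderConjugate_iff]
    refine ⟨(one_lt_div hl0).2 hlp, ?_⟩
    field_simp
    ring
  have hfpow : ∀ t, (f t * v t ^ (-((p - l) / p))) ^ (p / l) =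
      f t ^ (p / l) * v t ^ (-((p - l) / l)) := by
    intro t
    rw [ENNReal.mul_rpow_of_nonneg _ _ (by positivity), ← ENNReal.rpow_mul]
    congr 2
    field_simp
  have hgpow : ∀ t, (v t ^ ((p - l) / p) * g t ^ (p - l)) ^ (p / (p - l)) = v t * g t ^ p := by
    intro t
    rw [ENNReal.mul_rpow_of_nonneg _ _ (by positivity), ← ENNReal.rpow_mul, ← ENNReal.rpow_mul,
      mul_div_cancel₀ _ hpl.ne', div_mul_div_cancel₀ hp.ne', div_self hpl.ne', ENNReal.rpow_one]
  calc ∫⁻ t, f t * g t ^ (p - l) ∂μ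
      = ∫⁻ t, ((fun t => f t * v t ^ (-((p - l) / p))) *
          fun t => v t ^ ((p - l) / p) * g t ^ (p - l)) t ∂μ := by
        refine lintegral_congr_ae ?_
        filter_upwards [hv0, hvtop] with t ht0 httop
        rw [Pi.mul_apply, mul_assoc, ← mul_assoc (v t ^ _), ← ENNReal.rpow_add _ _ ht0 httop,
          neg_add_cancel, ENNReal.rpow_zero, one_mul]
    _ ≤ _ := ENNReal.lintegral_mul_le_Lp_mul_Lq μ hconj (hf.mul (hv.pow_const _))
        ((hv.pow_const _).mul (hg.pow_const _))
    _ = _ := by simp only [one_div_div, hfpow, hgpow]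

lemma lintegral_le_weighted_holder {α : Type*} [MeasurableSpace α] {μ : Measure α} (hp : 1 < p)
    {g v : α → ℝ≥0∞} (hg : AEMeasurable g μ) (hv : AEMeasurable v μ) (hv0 : ∀ᵐ t ∂μ, v t ≠ 0)
    (hvtop : ∀ᵐ t ∂μ, v t ≠ ⊤) :
    ∫⁻ t, g t ∂μ ≤
      (∫⁻ t, v t ^ (-(1 / (p - 1))) ∂μ) ^ ((p - 1) / p) * (∫⁻ t, v t * g t ^ p ∂μ) ^ (1 / p) := by
  simpa only [one_mul, ENNReal.one_rpow, sub_sub_cancel, ENNReal.rpow_one] using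
    lintegral_mul_rpow_le_weighted_holder (sub_pos.2 hp) (sub_one_lt p)
      (aemeasurable_const (b := (1 : ℝ≥0∞))) hg hv hv0 hvtop

/-- The integrand of the Beesack–Das constant `K(s, ·, q, v)`, for `ℝ≥0∞`-valued weights. -/
noncomputable def beesackDasDensity (p l : ℝ) (q v : ℝ → ℝ≥0∞) (s t : ℝ) : ℝ≥0∞ :=
  q t ^ (p / l) * v t ^ (-((p - l) / l)) *
    (∫⁻ σ in Ioc s t, v σ ^ (-(1 / (p - 1)))) ^ (p - 1)

lemma setLIntegral_beesackDasDensity_ne_top (hl0 : 0 < l) (hlp : l < p) {q v : ℝ → ℝ} {s : ℝ}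
    {S : Set ℝ} (hK : BDK p l q v s S < ⊤) :
    ∫⁻ t in S, beesackDasDensity p l (fun t => ENNReal.ofReal (q t))
      (fun t => ENNReal.ofReal (v t)) s t ≠ ⊤ := by
  intro htop
  have hp : 0 < p := hl0.trans hlp
  have : 0 < p - l := sub_pos.2 hlp
  refine hK.ne ?_
  simp only [beesackDasDensity] at htop
  rw [BDK, htop, ENNReal.top_rpow_of_pos (by positivity), ENNReal.mul_top]
  exact (ENNReal.ofReal_pos.2 (by positivity)).ne'

/-- An Opial-type inequality of Beesack and Das, without the sharp numerical factor. -/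
theorem lintegral_mul_rpow_mul_rpow_le (hp : 1 < p) (hl0 : 0 < l) (hlp : l < p) {s r : ℝ}
    {v q g y : ℝ → ℝ≥0∞} (hv : AEMeasurable v (volume.restrict (Ioc s r)))
    (hq : AEMeasurable q (volume.restrict (Ioc s r)))
    (hg : AEMeasurable g (volume.restrict (Ioc s r)))
    (hv0 : ∀ᵐ t ∂volume.restrict (Ioc s r), v t ≠ 0)
    (hvtop : ∀ᵐ t ∂volume.restrict (Ioc s r), v t ≠ ⊤)
    (hy : ∀ t ∈ Ioc s r, y t ≤ ∫⁻ σ in Ioc s t, g σ) :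
    ∫⁻ t in Ioc s r, q t * y t ^ l * g t ^ (p - l) ≤
      (∫⁻ t in Ioc s r, beesackDasDensity p l q v s t) ^ (l / p) *
        ∫⁻ t in Ioc s r, v t * g t ^ p := by
  have hp0 : 0 < p := one_pos.trans hp
  have : 0 < p - l := sub_pos.2 hlp
  set G := ∫⁻ t in Ioc s r, v t * g t ^ p
  set W : ℝ → ℝ≥0∞ := fun t => ∫⁻ σ in Ioc s t, v σ ^ (-(1 / (p - 1)))
  have hW : Measurable W :=
    Monotone.measurable fun _ _ hxy => lintegral_mono_set (Ioc_subset_Ioc_right hxy)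
  have hyl : ∀ t ∈ Ioc s r, y t ^ l ≤ W t ^ ((p - 1) / p * l) * G ^ (l / p) := by
    intro t ht
    have hle : volume.restrict (Ioc s t) ≤ volume.restrict (Ioc s r) :=
      Measure.restrict_mono (Ioc_subset_Ioc_right ht.2) le_rfl
    have hyW : y t ≤ W t ^ ((p - 1) / p) * G ^ (1 / p) := by
      refine ((hy t ht).trans (lintegral_le_weighted_holder hp (hg.mono_measure hle)
        (hv.mono_measure hle) (ae_mono hle hv0) (ae_mono hle hvtop))).trans ?_
      gcongr
      exact lintegral_mono' hle le_rfl
    refine (ENNReal.rpow_le_rpow hyW hl0.le).trans_eq ?_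
    rw [ENNReal.mul_rpow_of_nonneg _ _ hl0.le, ← ENNReal.rpow_mul, ← ENNReal.rpow_mul,
      one_div_mul_eq_div]
  have hqW : AEMeasurable (fun t => q t * W t ^ ((p - 1) / p * l)) (volume.restrict (Ioc s r)) :=
    hq.mul (hW.pow_const _).aemeasurable
  have hdensity : ∀ t, (q t * W t ^ ((p - 1) / p * l)) ^ (p / l) * v t ^ (-((p - l) / l)) =
      beesackDasDensity p l q v s t := by
    intro t
    rw [beesackDasDensity, ENNReal.mul_rpow_of_nonneg _ _ (by positivity), ← ENNReal.rpow_mul,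
      mul_right_comm]
    congr 2
    field_simp
  calc ∫⁻ t in Ioc s r, q t * y t ^ l * g t ^ (p - l)
      ≤ ∫⁻ t in Ioc s r, G ^ (l / p) * (q t * W t ^ ((p - 1) / p * l) * g t ^ (p - l)) := by
        refine setLIntegral_mono' measurableSet_Ioc fun t ht => ?_
        grw [hyl t ht]
        exact (by ring : _ = _).le
    _ = G ^ (l / p) * ∫⁻ t in Ioc s r, q t * W t ^ ((p - 1) / p * l) * g t ^ (p - l) :=
        lintegral_const_mul'' _ (hqW.mul (hg.pow_const _))
    _ ≤ G ^ (l / p) * ((∫⁻ t in Ioc s r, beesackDasDensity p l q v s t) ^ (l / p) *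
          G ^ ((p - l) / p)) := by
        gcongr
        simpa only [hdensity] using
          lintegral_mul_rpow_le_weighted_holder hl0 hlp hqW hg hv hv0 hvtop
    _ = (∫⁻ t in Ioc s r, beesackDasDensity p l q v s t) ^ (l / p) * G := by
        rw [mul_left_comm, ← ENNReal.rpow_add_of_nonneg _ _ (by positivity) (by positivity),
          ← add_div, add_sub_cancel, div_self hp0.ne', ENNReal.rpow_one]

lemma ofReal_integral_le_lintegral_ofReal {α : Type*} [MeasurableSpace α] {μ : Measure α}
    {f : α → ℝ} (hf : Integrable f μ) :
    ENNReal.ofReal (∫ x, f x ∂μ) ≤ ∫⁻ x, ENNReal.ofReal (f x) ∂μ := by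
  refine ENNReal.ofReal_le_of_le_toReal ?_
  rw [integral_eq_lintegral_pos_part_sub_lintegral_neg_part hf]
  exact sub_le_self _ ENNReal.toReal_nonneg

theorem ACOn.integral_mul_rpow_mul_rpow_le (hp : 1 < p) (hl0 : 0 < l) (hlp : l < p) {s r : ℝ}
    (hsr : s ≤ r) {u u' q v : ℝ → ℝ} (hu : ACOn u u' s r) (hus : u s = 0)
    (hA : IntegrableOn (fun x => q x * (|u x| ^ l * |u' x| ^ (p - l))) (Icc s r))
    (hB : IntegrableOn (fun x => v x * |u' x| ^ p) (Icc s r))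
    (hq : IntegrableOn q (Icc s r)) (hv : IntegrableOn v (Icc s r))
    (hvpos : ∀ᵐ x ∂volume.restrict (Icc s r), 0 < v x)
    (hJ : ∫⁻ t in Ioc s r, beesackDasDensity p l (fun t => ENNReal.ofReal (q t))
      (fun t => ENNReal.ofReal (v t)) s t ≤ 1) :
    ∫ x in s..r, q x * (|u x| ^ l * |u' x| ^ (p - l)) ≤ ∫ x in s..r, v x * |u' x| ^ p := by
  have hpl : 0 < p - l := sub_pos.2 hlp
  rw [IntegrableOn, ← restrict_Ioc_eq_restrict_Icc] at hA hB hq hv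
  rw [← restrict_Ioc_eq_restrict_Icc] at hvpos
  have hBnonneg : 0 ≤ᵐ[volume.restrict (Ioc s r)] fun x => v x * |u' x| ^ p :=
    hvpos.mono fun x hx => by dsimp only [Pi.zero_apply]; positivity
  rw [intervalIntegral.integral_of_le hsr, intervalIntegral.integral_of_le hsr,
    ← ENNReal.ofReal_le_ofReal_iff (integral_nonneg_of_ae hBnonneg)]
  have hu' : AEMeasurable u' (volume.restrict (Ioc s r)) :=
    (hu.1.mono_set Ioc_subset_Icc_self).aemeasurable
  calc ENNReal.ofReal (∫ x in Ioc s r, q x * (|u x| ^ l * |u' x| ^ (p - l)))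
      ≤ ∫⁻ x in Ioc s r, ENNReal.ofReal (q x * (|u x| ^ l * |u' x| ^ (p - l))) :=
        ofReal_integral_le_lintegral_ofReal hA
    _ = ∫⁻ x in Ioc s r, ENNReal.ofReal (q x) * ‖u x‖ₑ ^ l * ‖u' x‖ₑ ^ (p - l) := by
        refine lintegral_congr fun x => ?_
        rw [ENNReal.ofReal_mul' (by positivity), ENNReal.ofReal_mul (by positivity),
          ← ENNReal.ofReal_rpow_of_nonneg (abs_nonneg _) hl0.le,
          ← ENNReal.ofReal_rpow_of_nonneg (abs_nonneg _) hpl.le,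
          ← Real.enorm_eq_ofReal_abs, ← Real.enorm_eq_ofReal_abs, mul_assoc]
    _ ≤ _ := lintegral_mul_rpow_mul_rpow_le hp hl0 hlp hv.aemeasurable.ennreal_ofReal
        hq.aemeasurable.ennreal_ofReal hu'.enorm
        (hvpos.mono fun x hx => (ENNReal.ofReal_pos.2 hx).ne')
        (.of_forall fun x => ENNReal.ofReal_ne_top) fun t ht => by
          simpa only [hus, sub_zero] using hu.enorm_sub_le_lintegral (Ioc_subset_Icc_self ht)
    _ ≤ 1 * ∫⁻ x in Ioc s r, ENNReal.ofReal (v x) * ‖u' x‖ₑ ^ p := by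
        gcongr
        exact ENNReal.rpow_le_one hJ (by positivity)
    _ = ∫⁻ x in Ioc s r, ENNReal.ofReal (v x * |u' x| ^ p) := by
        rw [one_mul]
        refine lintegral_congr fun x => ?_
        rw [ENNReal.ofReal_mul' (by positivity), Real.enorm_eq_ofReal_abs,
          ENNReal.ofReal_rpow_of_nonneg (abs_nonneg _) (by positivity)]
    _ = ENNReal.ofReal (∫ x in Ioc s r, v x * |u' x| ^ p) :=
        (ofReal_integral_eq_lintegral_ofReal hB hBnonneg).symm

lemma le_of_ae_deriv_le_opial (hp : 1 < p) (hl0 : 0 < l) (hlp : l < p) {θ s r : ℝ} (hθ : 0 ≤ θ)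
    (hsr : s ≤ r) {E u u' q v : ℝ → ℝ} (hE : AbsolutelyContinuousOnInterval E s r)
    (hE' : ∀ᵐ x ∂volume.restrict (Icc s r),
      deriv E x ≤ θ * (q x * (|u x| ^ l * |u' x| ^ (p - l)) - v x * |u' x| ^ p))
    (hu : ACOn u u' s r) (hus : u s = 0) (hu' : ContinuousOn u' (Icc s r))
    (hq : IntegrableOn q (Icc s r)) (hv : IntegrableOn v (Icc s r))
    (hvpos : ∀ᵐ x ∂volume.restrict (Icc s r), 0 < v x)
    (hJ : ∫⁻ t in Ioc s r, beesackDasDensity p l (fun t => ENNReal.ofReal (q t))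
      (fun t => ENNReal.ofReal (v t)) s t ≤ 1) :
    E r ≤ E s := by
  have hpow : ∀ {f : ℝ → ℝ} {c : ℝ}, ContinuousOn f (Icc s r) → 0 ≤ c →
      ContinuousOn (fun x => |f x| ^ c) (Icc s r) := fun hf hc =>
    hf.abs.rpow_const fun _ _ => Or.inr hc
  have hA : IntegrableOn (fun x => q x * (|u x| ^ l * |u' x| ^ (p - l))) (Icc s r) :=
    hq.mul_continuousOn ((hpow (hu.continuousOn hsr) hl0.le).mul (hpow hu' (sub_nonneg.2 hlp.le)))
      isCompact_Icc
  have hB : IntegrableOn (fun x => v x * |u' x| ^ p) (Icc s r) :=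
    hv.mul_continuousOn (hpow hu' (by positivity)) isCompact_Icc
  have hopial := hu.integral_mul_rpow_mul_rpow_le hp hl0 hlp hsr hus hA hB hq hv hvpos hJ
  rw [← intervalIntegrable_iff_integrableOn_Icc_of_le hsr] at hA hB
  have hsub := sub_le_integral_of_ae_deriv_le hsr hE ((hA.sub hB).const_mul θ) hE'
  rw [intervalIntegral.integral_const_mul, intervalIntegral.integral_sub hA hB] at hsub
  exact sub_nonpos.1 (hsub.trans (mul_nonpos_of_nonneg_of_nonpos hθ (sub_nonpos.2 hopial)))

end Opial

section Energy

lemma integral_pos_of_ae_pos {f : ℝ → ℝ} {x y : ℝ} (hxy : x < y)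
    (hf : IntervalIntegrable f volume x y) (hpos : ∀ᵐ t ∂volume.restrict (Ioc x y), 0 < f t) :
    0 < ∫ t in x..y, f t := by
  rw [intervalIntegral.integral_pos_iff_support_of_nonneg_ae'
    (by rw [uIoc_of_le hxy.le]; exact hpos.mono fun t ht => ht.le) hf]
  have hsupp : (Function.support f : Set ℝ) =ᵐ[volume.restrict (Ioc x y)] univ :=
    eventuallyEq_univ.2 (hpos.mono fun t ht => ht.ne')
  rw [← Measure.restrict_apply' measurableSet_Ioc, measure_congr hsupp]
  simp [hxy]

lemma integral_pos_of_ae_mul_pos {φ : ℝ → ℝ} (hφ : Continuous φ) (hsign : ∀ᵐ t, 0 < t * φ t)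
    {x : ℝ} (hx : x ≠ 0) : 0 < ∫ t in (0 : ℝ)..x, φ t := by
  rcases hx.lt_or_gt with hx | hx
  · rw [intervalIntegral.integral_symm, ← intervalIntegral.integral_neg]
    refine integral_pos_of_ae_pos hx (hφ.neg.intervalIntegrable _ _) ?_
    filter_upwards [ae_restrict_of_ae hsign, ae_restrict_mem measurableSet_Ioc] with t ht htx
    exact neg_pos.2 (not_le.1 fun h => (mul_nonpos_of_nonpos_of_nonneg htx.2 h).not_gt ht)
  · refine integral_pos_of_ae_pos hx (hφ.intervalIntegrable _ _) ?_
    filter_upwards [ae_restrict_of_ae hsign, ae_restrict_mem measurableSet_Ioc] with t ht htx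
    exact pos_of_mul_pos_right ht htx.1.le

lemma contDiff_one_primitive {φ : ℝ → ℝ} (hφ : Continuous φ) :
    ContDiff ℝ 1 fun x => ∫ t in (0 : ℝ)..x, φ t := by
  have hderiv := hφ.integral_hasStrictDerivAt 0
  refine contDiff_one_iff_deriv.2 ⟨fun x => (hderiv x).hasDerivAt.differentiableAt, ?_⟩
  exact hφ.congr fun x => (hderiv x).hasDerivAt.deriv.symm

lemma nonneg_of_ae_nonneg_Icc {f : ℝ → ℝ} {s t : ℝ} (hst : s < t) (hf : ContinuousOn f (Icc s t))
    (hpos : ∀ᵐ x ∂volume.restrict (Icc s t), 0 ≤ f x) : ∀ x ∈ Icc s t, 0 ≤ f x := by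
  intro x hx
  have habs : EqOn f (fun x => |f x|) (Icc s t) := Measure.eqOn_Icc_of_ae_eq volume hst.ne
    (hpos.mono fun x hx => (abs_of_nonneg hx).symm) hf hf.abs
  exact (abs_nonneg (f x)).trans_eq (habs hx).symm

/-- The energy `(p - 1) / p * a |u'| ^ p + ∫₀ᵘ φ` of the pair `(u, u')`. -/
noncomputable def energy (p : ℝ) (φ a u u' : ℝ → ℝ) (τ : ℝ) : ℝ :=
  (p - 1) / p * (a τ * |u' τ| ^ p) + ∫ t in (0 : ℝ)..(u τ), φ t

variable {p : ℝ} {φ a a' u u' v' w' : ℝ → ℝ} {s t τ : ℝ}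

lemma energy_eq_zero_of_eq_zero (hp : p ≠ 0) (hu : u τ = 0) (hu' : u' τ = 0) :
    energy p φ a u u' τ = 0 := by
  simp [energy, hu, hu', Real.zero_rpow hp]

lemma primitive_le_energy (hp : 1 < p) (ha : 0 ≤ a τ) :
    ∫ t in (0 : ℝ)..(u τ), φ t ≤ energy p φ a u u' τ := by
  have : 0 < p - 1 := sub_pos.2 hp
  exact le_add_of_nonneg_left (by positivity)

lemma absolutelyContinuousOnInterval_energy (hp : 1 < p) (hst : s ≤ t) (hφ : Continuous φ)
    (ha : ACOn a a' s t) (hu : ACOn u u' s t) (hv : ACOn (fun τ => PhiP p (u' τ)) v' s t) :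
    AbsolutelyContinuousOnInterval (energy p φ a u u') s t := by
  have hkin := contDiff_comp_absolutelyContinuousOnInterval
    (contDiff_abs_rpow (one_lt_conjExponent hp)) (hv.absolutelyContinuousOnInterval hst)
  refine absolutelyContinuousOnInterval_congr (fun x _ => ?_)
    ((((ha.absolutelyContinuousOnInterval hst).mul hkin).const_mul ((p - 1) / p)).add
      (contDiff_comp_absolutelyContinuousOnInterval (contDiff_one_primitive hφ)
        (hu.absolutelyContinuousOnInterval hst)))
  simp only [energy, Pi.add_apply, Pi.mul_apply, Function.comp_apply,
    abs_PhiP_rpow_conjExponent hp.ne']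

lemma ae_hasDerivAt_energy (hp : 1 < p) (hst : s ≤ t) (hφ : Continuous φ)
    (ha : ACOn a a' s t) (hu : ACOn u u' s t) (hv : ACOn (fun τ => PhiP p (u' τ)) v' s t)
    (hw : ACOn (fun τ => a τ * PhiP p (u' τ)) w' s t) :
    ∀ᵐ τ ∂volume.restrict (Icc s t), HasDerivAt (energy p φ a u u')
      ((w' τ + φ (u τ)) * u' τ - 1 / p * a' τ * |u' τ| ^ p) τ := by
  have hp0 : p ≠ 0 := (one_pos.trans hp).ne'
  have hp1 : p - 1 ≠ 0 := sub_ne_zero.2 hp.ne'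
  filter_upwards [ha.ae_hasDerivAt hst, hu.ae_hasDerivAt hst, hv.ae_hasDerivAt hst,
    hw.ae_hasDerivAt hst] with τ haτ huτ hvτ hwτ
  have hprod : w' τ = a' τ * PhiP p (u' τ) + a τ * v' τ := hwτ.unique (haτ.mul hvτ)
  have hkin : HasDerivAt (fun τ => |u' τ| ^ p) (p.conjExponent * u' τ * v' τ) τ := by
    have := (hasDerivAt_abs_rpow_PhiP (one_lt_conjExponent hp) (PhiP p (u' τ))).comp τ hvτ
    simpa only [Function.comp_def, abs_PhiP_rpow_conjExponent hp.ne',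
      PhiP_conjExponent_PhiP hp.ne'] using this
  have hpot := ((hφ.integral_hasStrictDerivAt 0 (u τ)).hasDerivAt).comp τ huτ
  refine (((haτ.mul hkin).const_mul ((p - 1) / p)).add hpot).congr_deriv ?_
  rw [hprod, Real.conjExponent, ← PhiP_mul_self hp0]
  field_simp
  ring

lemma ae_deriv_energy_le {l θ : ℝ} {b d q : ℝ → ℝ} {h : ℝ → ℝ → ℝ → ℝ} (hp : 1 < p) (hst : s ≤ t)
    (hφ : Continuous φ) (hd : ∀ τ, d τ = b τ + 1 / p * a' τ)
    (ha : ACOn a a' s t) (hu : ACOn u u' s t) (hv : ACOn (fun τ => PhiP p (u' τ)) v' s t)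
    (hw : ACOn (fun τ => a τ * PhiP p (u' τ)) w' s t)
    (hgrowth : ∀ᵐ τ ∂volume.restrict (Icc s t), ∀ lam₀ lam₁ : ℝ, h τ lam₀ lam₁ * lam₁ ≤
      θ * q τ * |lam₀| ^ l * |lam₁| ^ (p - l) + (1 - θ) * d τ * |lam₁| ^ p)
    (hODE : ∀ᵐ τ ∂volume.restrict (Icc s t),
      w' τ + b τ * PhiP p (u' τ) - h τ (u τ) (u' τ) + φ (u τ) = 0) :
    ∀ᵐ τ ∂volume.restrict (Icc s t), deriv (energy p φ a u u') τ ≤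
      θ * (q τ * (|u τ| ^ l * |u' τ| ^ (p - l)) - d τ * |u' τ| ^ p) := by
  filter_upwards [ae_hasDerivAt_energy hp hst hφ ha hu hv hw, hgrowth, hODE]
    with τ hderiv hgrowthτ hODEτ
  calc deriv (energy p φ a u u') τ
      = (w' τ + φ (u τ)) * u' τ - 1 / p * a' τ * |u' τ| ^ p := hderiv.deriv
    _ = h τ (u τ) (u' τ) * u' τ - d τ * |u' τ| ^ p := by
        rw [hd, ← PhiP_mul_self (one_pos.trans hp).ne']
        linear_combination u' τ * hODEτ
    _ ≤ _ := sub_le_sub_right (hgrowthτ _ _) _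
    _ = _ := by ring

end Energy

section Propagation

lemma tendsto_setLIntegral_Ioc_nhdsGT {f : ℝ → ℝ≥0∞} {x T : ℝ} (hxT : x < T)
    (hf : ∫⁻ t in Ioc x T, f t ≠ ⊤) :
    Tendsto (fun r => ∫⁻ t in Ioc x r, f t) (𝓝[>] x) (𝓝 0) := by
  have hlength : Tendsto (fun r => ENNReal.ofReal (r - x)) (𝓝[>] x) (𝓝 0) := by
    have hcont : Continuous fun r => ENNReal.ofReal (r - x) :=
      ENNReal.continuous_ofReal.comp (continuous_sub_right x)
    simpa using (hcont.tendsto x).mono_left nhdsWithin_le_nhds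
  have hvol : Tendsto (volume.restrict (Ioc x T) ∘ fun r => Ioc x r) (𝓝[>] x) (𝓝 0) :=
    tendsto_of_tendsto_of_tendsto_of_le_of_le tendsto_const_nhds hlength (fun _ => zero_le)
      fun r => (Measure.restrict_apply_le _ _).trans_eq Real.volume_Ioc
  refine (tendsto_setLIntegral_zero hf hvol).congr' ?_
  filter_upwards [Ioc_mem_nhdsGT hxT] with r hr
  rw [Measure.restrict_restrict measurableSet_Ioc,
    inter_eq_left.2 (Ioc_subset_Ioc_right hr.2)]

lemma eqOn_zero_of_nonneg_of_eventually_le {f : ℝ → ℝ} {s T : ℝ} (hf : ContinuousOn f (Icc s T))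
    (hnonneg : ∀ x ∈ Icc s T, 0 ≤ f x) (hs : f s = 0)
    (hstep : ∀ x ∈ Ico s T, f x = 0 → ∀ᶠ r in 𝓝[>] x, f r ≤ f x) : EqOn f 0 (Icc s T) := by
  have hclosed : IsClosed ({x | f x = 0} ∩ Icc s T) := by
    rw [inter_comm]
    exact hf.preimage_isClosed_of_isClosed isClosed_Icc isClosed_singleton
  refine hclosed.Icc_subset_of_forall_mem_nhdsWithin hs fun x ⟨hx0, hx⟩ => ?_
  filter_upwards [hstep x hx hx0, Ioc_mem_nhdsGT hx.2] with r hr hrx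
  exact le_antisymm (hr.trans_eq hx0) (hnonneg r ⟨hx.1.trans hrx.1.le, hrx.2⟩)

end Propagation

theorem support_divergent_general {p l θ s T : ℝ} (hp : 1 < p) (hl0 : 0 < l) (hlp : l < p)
    (hθ : 0 ≤ θ) {φ : ℝ → ℝ} (hφ : Continuous φ)
    (hφpos : ∀ x ≠ 0, 0 < ∫ t in (0 : ℝ)..x, φ t)
    {a a' b d q : ℝ → ℝ} (hd : ∀ τ, d τ = b τ + 1 / p * a' τ) (ha : ACOn a a' s T)
    (hanonneg : ∀ᵐ τ ∂volume.restrict (Icc s T), 0 ≤ a τ)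
    (hdint : IntegrableOn d (Icc s T)) (hdpos : ∀ᵐ τ ∂volume.restrict (Icc s T), 0 < d τ)
    (hq : IntegrableOn q (Icc s T)) {h : ℝ → ℝ → ℝ → ℝ}
    (hgrowth : ∀ᵐ τ ∂volume.restrict (Icc s T), ∀ lam₀ lam₁ : ℝ, h τ lam₀ lam₁ * lam₁ ≤
      θ * q τ * |lam₀| ^ l * |lam₁| ^ (p - l) + (1 - θ) * d τ * |lam₁| ^ p)
    (hK : ∀ x ∈ Ico s T, BDK p l q d x (Ioc x T) < ⊤)
    {u u' v' w' : ℝ → ℝ} (hu : ACOn u u' s T) (hv : ACOn (fun τ => PhiP p (u' τ)) v' s T)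
    (hw : ACOn (fun τ => a τ * PhiP p (u' τ)) w' s T)
    (hODE : ∀ᵐ τ ∂volume.restrict (Icc s T),
      w' τ + b τ * PhiP p (u' τ) - h τ (u τ) (u' τ) + φ (u τ) = 0)
    (hus : u s = 0) (hu's : u' s = 0) : EqOn u 0 (Icc s T) := by
  rcases le_or_gt T s with hTs | hsT
  · intro x hx
    rw [le_antisymm (hx.2.trans hTs) hx.1, hus, Pi.zero_apply]
  set E := energy p φ a u u'
  have hpot : ∀ x ∈ Icc s T, ∫ t in (0 : ℝ)..(u x), φ t ≤ E x := fun x hx =>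
    primitive_le_energy hp (nonneg_of_ae_nonneg_Icc hsT (ha.continuousOn hsT.le) hanonneg x hx)
  have hEu : ∀ x ∈ Icc s T, E x = 0 → u x = 0 := fun x hx hEx =>
    by_contra fun hux => ((hφpos _ hux).trans_le (hpot x hx)).ne' hEx
  have hEnonneg : ∀ x ∈ Icc s T, 0 ≤ E x := by
    intro x hx
    rcases eq_or_ne (u x) 0 with hux | hux
    · simpa [hux] using hpot x hx
    · exact (hφpos _ hux).le.trans (hpot x hx)
  have hE := absolutelyContinuousOnInterval_energy hp hsT.le hφ ha hu hv
  have hE' := ae_deriv_energy_le hp hsT.le hφ hd ha hu hv hw hgrowth hODE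
  have hu'cont := continuousOn_of_continuousOn_PhiP hp (hv.continuousOn hsT.le)
  have hEzero : EqOn E 0 (Icc s T) := by
    refine eqOn_zero_of_nonneg_of_eventually_le (uIcc_of_le hsT.le ▸ hE.continuousOn) hEnonneg
      (energy_eq_zero_of_eq_zero (one_pos.trans hp).ne' hus hu's) fun x hx hEx => ?_
    have hsmall := (tendsto_setLIntegral_Ioc_nhdsGT hx.2
      (setLIntegral_beesackDasDensity_ne_top hl0 hlp (hK x hx))).eventually_le_const one_pos
    filter_upwards [hsmall, Ioc_mem_nhdsGT hx.2] with r hJ hr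
    have hsub : Icc x r ⊆ Icc s T := Icc_subset_Icc hx.1 hr.2
    exact le_of_ae_deriv_le_opial hp hl0 hlp hθ hr.1.le
      (hE.mono (by rwa [uIcc_of_le hr.1.le, uIcc_of_le hsT.le]))
      (ae_restrict_of_ae_restrict_of_subset hsub hE') (hu.mono hx.1 hr.2)
      (hEu x (Ico_subset_Icc_self hx) hEx) (hu'cont.mono hsub) (hq.mono_set hsub)
      (hdint.mono_set hsub) (ae_restrict_of_ae_restrict_of_subset hsub hdpos) hJ
  exact fun x hx => hEu x hx (hEzero hx)

/-- **Support of the solution (divergent form)**. -/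
theorem support_divergent
    (p l n : ℝ) (R : ℝ≥0∞)
    (hp : 1 < p) (hl0 : 0 < l) (hlp : l < p) (hn : 1 ≤ n) (hR : 0 < R)
    (φ : ℝ → ℝ) (hφcont : Continuous φ) (hφodd : ∀ t : ℝ, φ (-t) = -φ t)
    (hφsign : ∀ᵐ τ ∂(volume : Measure ℝ), 0 < τ * φ τ)
    (a a' : ℝ → ℝ)
    (haAC : ∀ s r : ℝ, 0 < s → s ≤ r → ENNReal.ofReal r < R → ACOn a a' s r)
    (q : ℝ → ℝ) (hqmeas : Measurable q)
    (hapos : ∀ᵐ τ ∂(volume.restrict {τ : ℝ | 0 < τ ∧ ENNReal.ofReal τ < R}), 0 < a τ)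
    (hvpos : ∀ᵐ τ ∂(volume.restrict {τ : ℝ | 0 < τ ∧ ENNReal.ofReal τ < R}), 0 < dA n p a a' τ)
    (hvint : ∀ s r : ℝ, 0 < s → s ≤ r → ENNReal.ofReal r < R →
      IntegrableOn (dA n p a a') (Set.Icc s r) ∧
        IntegrableOn (fun τ => dA n p a a' τ ^ (-(1 / (p - 1)))) (Set.Icc s r))
    (hqint : ∀ s r : ℝ, 0 < s → s ≤ r → ENNReal.ofReal r < R → IntegrableOn q (Set.Icc s r))
    (h : ℝ → ℝ → ℝ → ℝ)
    (hhmeas : ∀ lam₀ lam₁ : ℝ, Measurable fun τ => h τ lam₀ lam₁)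
    (hhcont : ∀ τ : ℝ, Continuous fun z : ℝ × ℝ => h τ z.1 z.2)
    (θ : ℝ) (hθ0 : 0 < θ) (hθ1 : θ ≤ 1)
    (hq0 : ∀ᵐ τ ∂(volume.restrict {τ : ℝ | 0 < τ ∧ ENNReal.ofReal τ < R}), 0 ≤ q τ)
    (hgrowth : ∀ᵐ τ ∂(volume.restrict {τ : ℝ | 0 < τ ∧ ENNReal.ofReal τ < R}),
      ∀ lam₀ lam₁ : ℝ, h τ lam₀ lam₁ * lam₁ ≤
        θ * q τ * |lam₀| ^ l * |lam₁| ^ (p - l) + (1 - θ) * dA n p a a' τ * |lam₁| ^ p)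
    (hK : ∀ s r : ℝ, 0 < s → s < r → ENNReal.ofReal r < R →
      BDK p l q (dA n p a a') s (Set.Ioc s r) < ⊤)
    (u u' v' w' : ℝ → ℝ)
    (huAC : ∀ s r : ℝ, 0 < s → s ≤ r → ENNReal.ofReal r < R → ACOn u u' s r)
    (hvAC : ∀ s r : ℝ, 0 < s → s ≤ r → ENNReal.ofReal r < R →
      ACOn (fun τ => PhiP p (u' τ)) v' s r)
    (hwAC : ∀ s r : ℝ, 0 < s → s ≤ r → ENNReal.ofReal r < R →
      ACOn (fun τ => a τ * PhiP p (u' τ)) w' s r)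
    (hODE : ∀ᵐ τ ∂(volume.restrict {τ : ℝ | 0 < τ ∧ ENNReal.ofReal τ < R}),
      w' τ + (n - 1) * (a τ / τ) * PhiP p (u' τ)
        - h τ (u τ) (u' τ) + φ (u τ) = 0) :
    ∀ s : ℝ, 0 < s → ENNReal.ofReal s < R → u s = 0 → u' s = 0 →
      ∀ τ : ℝ, s ≤ τ → ENNReal.ofReal τ < R → u τ = 0 := by
  intro s hs _ hus hu's τ hsτ hτR
  have hlt : ∀ x ≤ τ, ENNReal.ofReal x < R := fun x hx => (ENNReal.ofReal_mono hx).trans_lt hτR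
  have hsub : Icc s τ ⊆ {τ : ℝ | 0 < τ ∧ ENNReal.ofReal τ < R} := fun x hx =>
    ⟨hs.trans_le hx.1, hlt x hx.2⟩
  exact support_divergent_general (b := fun τ => (n - 1) * (a τ / τ)) hp hl0 hlp hθ0.le hφcont
    (fun _ => integral_pos_of_ae_mul_pos hφcont hφsign) (fun τ => by rw [dA, mul_div_assoc])
    (haAC s τ hs hsτ hτR)
    (ae_restrict_of_ae_restrict_of_subset hsub (hapos.mono fun _ => le_of_lt))
    (hvint s τ hs hsτ hτR).1 (ae_restrict_of_ae_restrict_of_subset hsub hvpos)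
    (hqint s τ hs hsτ hτR) (ae_restrict_of_ae_restrict_of_subset hsub hgrowth)
    (fun x hx => hK x τ (hs.trans_le hx.1) hx.2 hτR) (huAC s τ hs hsτ hτR) (hvAC s τ hs hsτ hτR)
    (hwAC s τ hs hsτ hτR) (ae_restrict_of_ae_restrict_of_subset hsub hODE) hus hu's
    ⟨hsτ, le_rfl⟩
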